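/- Let S be a nonempty closed subset of Euclidean space ℝ^d, let U ⊆ ℝ^d be an open set, and let cp : U → ℝ^d be a map such that for every x ∈ U, cp(x) ∈ S, dist(x, cp(x)) = infDist(x, S), and cp(x) is the unique point of S at this minimal distance. Let f : S → ℝ be any function and define the closest point extension E f : U → ℝ by (E f)(x) = f(cp(x)). Then for every x ∈ U and every t ∈ [0, 1] such that the point y = x + t • (cp(x) − x) lies in U, one has (E f)(y) = (E f)(x); moreover (E f)(x) = f(x) whenever x ∈ S ∩ U. -/

import Mathlib

-- The distance to `S` drops by at most `dist x y` on the way from `x` to `y`, while the distance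
-- to `p` drops by exactly that much.
theorem dist_eq_infDist_of_dist_add_dist_eq {α : Type*} [PseudoMetricSpace α] {S : Set α}
    {x y p : α} (hp : p ∈ S) (hxp : dist x p = Metric.infDist x S)
    (hxyp : dist x y + dist y p = dist x p) : dist y p = Metric.infDist y S := by
  refine le_antisymm ?_ (Metric.infDist_le_dist_of_mem hp)
  have hdrop : Metric.infDist x S ≤ Metric.infDist y S + dist x y :=
    Metric.infDist_le_infDist_add_dist
  linarith

/-- The closest point map `cp_S` of a set `S` on a region `U`: every `x ∈ U` has a unique nearest
point in `S`, namely `cp x`. The map `cp` is total, with unconstrained values outside `U`. -/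
structure IsClosestPointMapOn {α : Type*} [PseudoMetricSpace α] (cp : α → α) (S U : Set α) :
    Prop where
  mem : ∀ x ∈ U, cp x ∈ S
  dist_eq : ∀ x ∈ U, dist x (cp x) = Metric.infDist x S
  unique : ∀ x ∈ U, ∀ q ∈ S, dist x q = Metric.infDist x S → q = cp x

namespace IsClosestPointMapOn

section PseudoMetricSpace

variable {α : Type*} [PseudoMetricSpace α] {cp : α → α} {S U : Set α} {x y : α}

theorem apply_eq_of_dist_add_dist_eq (h : IsClosestPointMapOn cp S U) (hx : x ∈ U) (hy : y ∈ U)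
    (hxy : dist x y + dist y (cp x) = dist x (cp x)) : cp y = cp x :=
  (h.unique y hy (cp x) (h.mem x hx)
    (dist_eq_infDist_of_dist_add_dist_eq (h.mem x hx) (h.dist_eq x hx) hxy)).symm

theorem apply_eq_self (h : IsClosestPointMapOn cp S U) (hxS : x ∈ S) (hxU : x ∈ U) : cp x = x :=
  (h.unique x hxU x hxS (by rw [dist_self, Metric.infDist_zero_of_mem hxS])).symm

end PseudoMetricSpace

theorem apply_eq_of_mem_segment {E : Type*} [SeminormedAddCommGroup E] [NormedSpace ℝ E]
    {cp : E → E} {S U : Set E} {x y : E} (h : IsClosestPointMapOn cp S U) (hx : x ∈ U)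
    (hy : y ∈ U) (hxy : y ∈ segment ℝ x (cp x)) : cp y = cp x :=
  h.apply_eq_of_dist_add_dist_eq hx hy (dist_add_dist_of_mem_segment hxy)

end IsClosestPointMapOn

theorem closest_point_extension_constant_along_normals_general
    {E β : Type*} [SeminormedAddCommGroup E] [NormedSpace ℝ E] {S U : Set E} {cp : E → E}
    (hcp : IsClosestPointMapOn cp S U) (f : S → β) (Ef : E → β)
    (hEf : ∀ x (hx : x ∈ U), Ef x = f ⟨cp x, hcp.mem x hx⟩) :
    (∀ x ∈ U, ∀ t ∈ Set.Icc (0 : ℝ) 1,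
        x + t • (cp x - x) ∈ U → Ef (x + t • (cp x - x)) = Ef x) ∧
    (∀ x, ∀ hx : x ∈ S ∩ U, Ef x = f ⟨x, hx.1⟩) := by
  refine ⟨fun x hx t ht hy ↦ ?_, fun x hx ↦ ?_⟩
  · have hseg : x + t • (cp x - x) ∈ segment ℝ x (cp x) := by
      rw [segment_eq_image']
      exact Set.mem_image_of_mem _ ht
    simp only [hEf _ hy, hEf x hx, hcp.apply_eq_of_mem_segment hx hy hseg]
  · simp only [hEf x hx.2, hcp.apply_eq_self hx.1 hx.2]

/-- Let `cp` map every `x ∈ U` to its unique nearest point in the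
nonempty closed set `S ⊆ ℝ^d`. For `f : S → ℝ`, the closest point extension
`Ef x = f (cp x)` is constant along the normal segment from `x` to `cp x`
(as long as the point stays in `U`), and agrees with `f` on `S ∩ U`. -/
theorem closest_point_extension_constant_along_normals
    {d : ℕ} (S : Set (EuclideanSpace ℝ (Fin d)))
    (hS : S.Nonempty) (hSclosed : IsClosed S)
    (U : Set (EuclideanSpace ℝ (Fin d))) (hU : IsOpen U)
    (cp : EuclideanSpace ℝ (Fin d) → EuclideanSpace ℝ (Fin d))
    (hmem : ∀ x ∈ U, cp x ∈ S)
    (hdist : ∀ x ∈ U, dist x (cp x) = Metric.infDist x S)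
    (huniq : ∀ x ∈ U, ∀ q ∈ S, dist x q = Metric.infDist x S → q = cp x)
    (f : S → ℝ)
    (Ef : EuclideanSpace ℝ (Fin d) → ℝ)
    (hEf : ∀ x (hx : x ∈ U), Ef x = f ⟨cp x, hmem x hx⟩) :
    (∀ x ∈ U, ∀ t ∈ Set.Icc (0 : ℝ) 1,
        x + t • (cp x - x) ∈ U → Ef (x + t • (cp x - x)) = Ef x) ∧
    (∀ x, ∀ hx : x ∈ S ∩ U, Ef x = f ⟨x, hx.1⟩) := by
  exact closest_point_extension_constant_along_normals_general ⟨hmem, hdist, huniq⟩ f Ef hEf
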